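/- Let p ∈ (0,1) and let (f_n)_{n≥1} be a sequence of functions f_n : {0,1}^n → [0,1]. If lim_{n→∞} Var_r(E_{p/r}[f_n(ψ·ξ) | ψ]) = 0 for some r ∈ (p,1), then lim_{n→∞} Var_r(E_{p/r}[f_n(ψ·ξ) | ψ]) = 0 for every r ∈ (p,1). -/

import Mathlib

/-!
The characters `χ_S(ω) = ∏_{i ∈ S} (ω_i - p)` form an orthogonal basis of `L²(ℙ_p)`, and integrating
out `ξ` maps the `p`-biased `χ_S` to `(p / r) ^ |S|` times the `r`-biased one. Hence
`Var_r (E_{p/r}[f(ψ·ξ) | ψ]) = ∑_{S ≠ ∅} ρ_r ^ |S| W_S`, where `ρ_r = p (1 - r) / (r (1 - p)) < 1`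
and the spectral weights `W_S ≥ 0` of `f` do not depend on `r` and satisfy
`∑_{S ≠ ∅} W_S = Var_p f`. Given two scales `r₀` and `r`, choose `m` with `ρ_r ^ m ≤ ρ_{r₀}`;
Hölder's inequality with exponent `m` then bounds the variance at scale `r` by
`(Var_p f) ^ (1 - 1/m)` times the `m`-th root of the variance at scale `r₀`.
-/

open Finset Filter

namespace PartialObs

/-- Weight of a configuration `ω ∈ {0,1}^n` under the product measure `ℙ_p`. -/
noncomputable def w {n : ℕ} (p : ℝ) (ω : Fin n → Bool) : ℝ :=
  ∏ i, if ω i then p else 1 - p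

/-- Expectation with respect to `ℙ_p`. -/
noncomputable def E {n : ℕ} (p : ℝ) (f : (Fin n → Bool) → ℝ) : ℝ :=
  ∑ ω : Fin n → Bool, w p ω * f ω

/-- Variance with respect to `ℙ_p`. -/
noncomputable def Var {n : ℕ} (p : ℝ) (f : (Fin n → Bool) → ℝ) : ℝ :=
  E p (fun ω => (f ω - E p f) ^ 2)

/-- Coordinatewise product `ψ·ξ` of two configurations. -/
def prodCfg {n : ℕ} (ψ ξ : Fin n → Bool) : Fin n → Bool := fun i => ψ i && ξ i

/-- The conditional expectation `E_{p/r}[f(ψ·ξ) | ψ]`, as a function of `ψ`: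
`ξ` is integrated out according to `ℙ_{p/r}`. -/
noncomputable def condExp {n : ℕ} (p r : ℝ) (f : (Fin n → Bool) → ℝ)
    (ψ : Fin n → Bool) : ℝ :=
  E (p / r) (fun ξ => f (prodCfg ψ ξ))

section Expectation

variable {n : ℕ} {p : ℝ}

lemma w_nonneg (hp : p ∈ Set.Icc (0 : ℝ) 1) (ω : Fin n → Bool) : 0 ≤ w p ω :=
  prod_nonneg fun i _ => by
    split_ifs
    exacts [hp.1, sub_nonneg.2 hp.2]

lemma E_mono (hp : p ∈ Set.Icc (0 : ℝ) 1) {f g : (Fin n → Bool) → ℝ} (hfg : ∀ ω, f ω ≤ g ω) :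
    E p f ≤ E p g :=
  sum_le_sum fun ω _ => mul_le_mul_of_nonneg_left (hfg ω) (w_nonneg hp ω)

lemma E_sum_mul {ι : Type*} (p : ℝ) (s : Finset ι) (a : ι → ℝ) (g : ι → (Fin n → Bool) → ℝ) :
    E p (fun ω => ∑ j ∈ s, a j * g j ω) = ∑ j ∈ s, a j * E p (g j) := by
  simp only [E, mul_sum]
  rw [sum_comm]
  exact sum_congr rfl fun j _ => sum_congr rfl fun ω _ => mul_left_comm _ _ _

lemma E_prod (p : ℝ) (S : Finset (Fin n)) (g : Fin n → Bool → ℝ) :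
    E p (fun ω => ∏ i ∈ S, g i (ω i)) = ∏ i ∈ S, (p * g i true + (1 - p) * g i false) := by
  have weight_mul (ω : Fin n → Bool) : w p ω * ∏ i ∈ S, g i (ω i) =
      ∏ i, (if ω i then p else 1 - p) * (if i ∈ S then g i (ω i) else 1) := by
    rw [prod_mul_distrib, Fintype.prod_ite_mem, w]
  calc E p (fun ω => ∏ i ∈ S, g i (ω i))
      = ∏ i, ∑ b : Bool, (if b then p else 1 - p) * (if i ∈ S then g i b else 1) := by
        simp only [E, weight_mul, Fintype.prod_sum]
    _ = ∏ i, if i ∈ S then p * g i true + (1 - p) * g i false else 1 := by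
        refine prod_congr rfl fun i _ => ?_
        split_ifs <;> simp
    _ = _ := Fintype.prod_ite_mem S _

lemma sum_w (p : ℝ) : ∑ ω : Fin n → Bool, w p ω = 1 := by
  simpa only [E, prod_empty, mul_one] using E_prod p (∅ : Finset (Fin n)) fun _ _ => 0

lemma E_const (p c : ℝ) : E p (fun _ : Fin n → Bool => c) = c := by
  rw [E, ← sum_mul, sum_w, one_mul]

lemma E_mem_Icc (hp : p ∈ Set.Icc (0 : ℝ) 1) {a b : ℝ} {f : (Fin n → Bool) → ℝ}
    (hf : ∀ ω, f ω ∈ Set.Icc a b) : E p f ∈ Set.Icc a b :=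
  ⟨(E_const p a).symm.trans_le (E_mono hp fun ω => (hf ω).1),
    (E_mono hp fun ω => (hf ω).2).trans_eq (E_const p b)⟩

lemma Var_nonneg (hp : p ∈ Set.Icc (0 : ℝ) 1) (f : (Fin n → Bool) → ℝ) : 0 ≤ Var p f :=
  sum_nonneg fun ω _ => mul_nonneg (w_nonneg hp ω) (sq_nonneg _)

lemma Var_le_sq_of_mem_Icc (hp : p ∈ Set.Icc (0 : ℝ) 1) {a b : ℝ} {f : (Fin n → Bool) → ℝ}
    (hf : ∀ ω, f ω ∈ Set.Icc a b) : Var p f ≤ (b - a) ^ 2 := by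
  have abs_sub_mean_le (ω : Fin n → Bool) : |f ω - E p f| ≤ b - a :=
    Real.dist_le_of_mem_Icc (hf ω) (E_mem_Icc hp hf)
  exact (E_mono hp fun ω => sq_le_sq.2 ((abs_sub_mean_le ω).trans (le_abs_self _))).trans_eq
    (E_const p _)

end Expectation

section Fourier

variable {n : ℕ} {p r : ℝ}

/-- The Bernoulli(`p`) variable `b` minus its mean, with `true` and `false` read as `1` and `0`. -/
noncomputable def centred (p : ℝ) (b : Bool) : ℝ := (if b then 1 else 0) - p

/-- The `p`-biased character `χ_S` of the cube. It is not normalised: its squared norm in `L²(ℙ_p)`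
is `(p (1 - p)) ^ |S|`. -/
noncomputable def character (p : ℝ) (S : Finset (Fin n)) (ω : Fin n → Bool) : ℝ :=
  ∏ i ∈ S, centred p (ω i)

lemma E_character_mul_character (p : ℝ) (S T : Finset (Fin n)) :
    E p (fun ω => character p S ω * character p T ω) =
      if S = T then (p * (1 - p)) ^ #S else 0 := by
  have factor (i : Fin n) :
      p * ((if i ∈ S then centred p true else 1) * (if i ∈ T then centred p true else 1)) +
        (1 - p) *
          ((if i ∈ S then centred p false else 1) * (if i ∈ T then centred p false else 1)) =
      if i ∈ S ↔ i ∈ T then (if i ∈ S then p * (1 - p) else 1) else 0 := by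
    by_cases hS : i ∈ S <;> by_cases hT : i ∈ T <;> simp [hS, hT, centred] <;> ring
  have expectation_eq : E p (fun ω => character p S ω * character p T ω) =
      ∏ i, if i ∈ S ↔ i ∈ T then (if i ∈ S then p * (1 - p) else 1) else 0 := by
    simp only [character, ← Fintype.prod_ite_mem S, ← Fintype.prod_ite_mem T, ← prod_mul_distrib]
    exact (E_prod p univ fun i b =>
      (if i ∈ S then centred p b else 1) * (if i ∈ T then centred p b else 1)).trans
      (prod_congr rfl fun i _ => factor i)
  rw [expectation_eq]
  split_ifs with hST
  · simp only [hST, if_true, Fintype.prod_ite_mem, prod_const]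
  · obtain ⟨i, hi⟩ := not_forall.1 (mt Finset.ext hST)
    exact prod_eq_zero (mem_univ i) (if_neg hi)

lemma E_sq_sum_character (p : ℝ) (s : Finset (Finset (Fin n))) (a : Finset (Fin n) → ℝ) :
    E p (fun ω => (∑ S ∈ s, a S * character p S ω) ^ 2) =
      ∑ S ∈ s, a S ^ 2 * (p * (1 - p)) ^ #S := by
  have expand_sq (ω : Fin n → Bool) : (∑ S ∈ s, a S * character p S ω) ^ 2 =
      ∑ ST ∈ s ×ˢ s, a ST.1 * a ST.2 * (character p ST.1 ω * character p ST.2 ω) := by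
    rw [sq, sum_mul_sum, ← sum_product']
    exact sum_congr rfl fun _ _ => mul_mul_mul_comm _ _ _ _
  simp only [expand_sq, E_sum_mul, E_character_mul_character]
  rw [sum_product]
  refine sum_congr rfl fun S hS => ?_
  simp only [mul_ite, mul_zero, sum_ite_eq, if_pos hS, sq]

lemma w_mul_sum_character (hp₀ : p ≠ 0) (hp₁ : p ≠ 1) (η ω : Fin n → Bool) :
    w p η * ∑ S, character p S η * character p S ω / (p * (1 - p)) ^ #S =
      if η = ω then 1 else 0 := by
  have hq : 1 - p ≠ 0 := sub_ne_zero.2 hp₁.symm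
  have factor (a b : Bool) : (if a then p else 1 - p) *
      (1 + centred p a * centred p b / (p * (1 - p))) = if a = b then 1 else 0 := by
    cases a <;> cases b <;> simp [centred] <;> field_simp <;> simp
  have kernel_eq : ∑ S, character p S η * character p S ω / (p * (1 - p)) ^ #S =
      ∏ i, (1 + centred p (η i) * centred p (ω i) / (p * (1 - p))) := by
    simp only [prod_one_add, powerset_univ, prod_div_distrib, prod_const, ← prod_mul_distrib,
      character]
  rw [kernel_eq, w, ← prod_mul_distrib]
  simp [factor, Fintype.prod_boole, funext_iff]

/-- The coefficient of the `p`-biased character `χ_S` in the expansion of `f`. -/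
noncomputable def fourierCoeff (p : ℝ) (f : (Fin n → Bool) → ℝ) (S : Finset (Fin n)) : ℝ :=
  E p (fun ω => f ω * character p S ω) / (p * (1 - p)) ^ #S

lemma fourierCoeff_empty (p : ℝ) (f : (Fin n → Bool) → ℝ) : fourierCoeff p f ∅ = E p f := by
  simp [fourierCoeff, character]

lemma sum_fourierCoeff_mul_character (hp₀ : p ≠ 0) (hp₁ : p ≠ 1) (f : (Fin n → Bool) → ℝ)
    (ω : Fin n → Bool) : ∑ S, fourierCoeff p f S * character p S ω = f ω := by
  calc ∑ S, fourierCoeff p f S * character p S ω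
      = ∑ η, f η * (w p η * ∑ S, character p S η * character p S ω / (p * (1 - p)) ^ #S) := by
        simp only [fourierCoeff, E, sum_div, sum_mul, mul_sum]
        rw [sum_comm]
        exact sum_congr rfl fun η _ => sum_congr rfl fun S _ => by ring
    _ = f ω := by simp only [w_mul_sum_character hp₀ hp₁, mul_ite, mul_one, mul_zero,
        sum_ite_eq', mem_univ, if_true]

lemma fourierCoeff_sum_character (hp₀ : p ≠ 0) (hp₁ : p ≠ 1) (a : Finset (Fin n) → ℝ)
    (S : Finset (Fin n)) : fourierCoeff p (fun ω => ∑ T, a T * character p T ω) S = a S := by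
  have hpq : (p * (1 - p)) ^ #S ≠ 0 := pow_ne_zero _ (mul_ne_zero hp₀ (sub_ne_zero.2 hp₁.symm))
  simp only [fourierCoeff, sum_mul, mul_assoc, E_sum_mul, E_character_mul_character, mul_ite,
    mul_zero, sum_ite_eq', mem_univ, if_true]
  exact mul_div_cancel_right₀ _ hpq

lemma condExp_character (p : ℝ) (hr : r ≠ 0) (S : Finset (Fin n)) (ψ : Fin n → Bool) :
    condExp p r (character p S) ψ = (p / r) ^ #S * character r S ψ := by
  have factor (a : Bool) :
      p / r * centred p (a && true) + (1 - p / r) * centred p (a && false) =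
        p / r * centred r a := by
    cases a <;> simp [centred] <;> field_simp <;> ring
  calc condExp p r (character p S) ψ
      = ∏ i ∈ S, (p / r * centred p (ψ i && true) + (1 - p / r) * centred p (ψ i && false)) :=
        E_prod (p / r) S fun i b => centred p (ψ i && b)
    _ = (p / r) ^ #S * character r S ψ := by
        simp only [factor, prod_mul_distrib, prod_const, character]

lemma fourierCoeff_condExp (hp₀ : p ≠ 0) (hp₁ : p ≠ 1) (hr₀ : r ≠ 0) (hr₁ : r ≠ 1)
    (f : (Fin n → Bool) → ℝ) (S : Finset (Fin n)) :
    fourierCoeff r (condExp p r f) S = fourierCoeff p f S * (p / r) ^ #S := by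
  have expansion : condExp p r f =
      fun ψ => ∑ T, fourierCoeff p f T * (p / r) ^ #T * character r T ψ := by
    funext ψ
    calc condExp p r f ψ
        = condExp p r (fun ω => ∑ T, fourierCoeff p f T * character p T ω) ψ := by
          simp only [sum_fourierCoeff_mul_character hp₀ hp₁]
      _ = ∑ T, fourierCoeff p f T * condExp p r (character p T) ψ := E_sum_mul _ _ _ _
      _ = _ := by simp only [condExp_character p hr₀, mul_assoc]
  rw [expansion, fourierCoeff_sum_character hr₀ hr₁]

end Fourier

section SpectralWeight

variable {n : ℕ} {p r : ℝ}

/-- The spectral weight of `f` at `S`: the squared norm in `L²(ℙ_p)` of the component of `f` along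
the character `χ_S`. -/
noncomputable def spectralWeight (p : ℝ) (f : (Fin n → Bool) → ℝ) (S : Finset (Fin n)) : ℝ :=
  fourierCoeff p f S ^ 2 * (p * (1 - p)) ^ #S

lemma spectralWeight_nonneg (hp : p ∈ Set.Icc (0 : ℝ) 1) (f : (Fin n → Bool) → ℝ)
    (S : Finset (Fin n)) : 0 ≤ spectralWeight p f S :=
  mul_nonneg (sq_nonneg _) (pow_nonneg (mul_nonneg hp.1 (sub_nonneg.2 hp.2)) _)

lemma Var_eq_sum_spectralWeight (hp₀ : p ≠ 0) (hp₁ : p ≠ 1) (f : (Fin n → Bool) → ℝ) :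
    Var p f = ∑ S ∈ univ.erase ∅, spectralWeight p f S := by
  have sub_mean_eq (ω : Fin n → Bool) :
      f ω - E p f = ∑ S ∈ univ.erase ∅, fourierCoeff p f S * character p S ω := by
    rw [← sum_fourierCoeff_mul_character hp₀ hp₁ f ω, ← fourierCoeff_empty,
      ← add_sum_erase univ _ (mem_univ ∅)]
    simp [character]
  simp only [Var, sub_mean_eq, E_sq_sum_character, spectralWeight]

/-- The factor by which integrating out `ξ`, from scale `p` up to scale `r`, damps the spectral
weight per coordinate of `S`. -/
noncomputable def damping (p r : ℝ) : ℝ := p * (1 - r) / (r * (1 - p))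

lemma damping_pos (hp : p ∈ Set.Ioo (0 : ℝ) 1) (hr : r ∈ Set.Ioo (0 : ℝ) 1) : 0 < damping p r :=
  div_pos (mul_pos hp.1 (sub_pos.2 hr.2)) (mul_pos hr.1 (sub_pos.2 hp.2))

lemma damping_lt_one (hp : p ∈ Set.Ioo (0 : ℝ) 1) (hr : p < r) : damping p r < 1 := by
  rw [damping, div_lt_one (mul_pos (hp.1.trans hr) (sub_pos.2 hp.2))]
  linarith

lemma spectralWeight_condExp (hp₀ : p ≠ 0) (hp₁ : p ≠ 1) (hr₀ : r ≠ 0) (hr₁ : r ≠ 1)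
    (f : (Fin n → Bool) → ℝ) (S : Finset (Fin n)) :
    spectralWeight r (condExp p r f) S = spectralWeight p f S * damping p r ^ #S := by
  have hq : 1 - p ≠ 0 := sub_ne_zero.2 hp₁.symm
  have base_eq : (p / r) ^ 2 * (r * (1 - r)) = p * (1 - p) * damping p r := by
    rw [damping]
    field_simp
  rw [spectralWeight, spectralWeight, fourierCoeff_condExp hp₀ hp₁ hr₀ hr₁, mul_pow, mul_assoc,
    mul_assoc, ← pow_mul, mul_comm #S, pow_mul, ← mul_pow, ← mul_pow, base_eq]

lemma Var_condExp_eq_sum (hp₀ : p ≠ 0) (hp₁ : p ≠ 1) (hr₀ : r ≠ 0) (hr₁ : r ≠ 1)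
    (f : (Fin n → Bool) → ℝ) :
    Var r (condExp p r f) = ∑ S ∈ univ.erase ∅, spectralWeight p f S * damping p r ^ #S := by
  simp only [Var_eq_sum_spectralWeight hr₀ hr₁, spectralWeight_condExp hp₀ hp₁ hr₀ hr₁]

end SpectralWeight

section Comparison

variable {p r₀ r : ℝ}

lemma Var_condExp_le_rpow_mul_rpow {n m : ℕ} (hp : p ∈ Set.Ioo (0 : ℝ) 1)
    (hr₀ : r₀ ∈ Set.Ioo (0 : ℝ) 1) (hr : r ∈ Set.Ioo (0 : ℝ) 1) (hm : m ≠ 0)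
    (hdamping : damping p r ^ m ≤ damping p r₀) (f : (Fin n → Bool) → ℝ) :
    Var r (condExp p r f) ≤
      Var p f ^ (1 - (m : ℝ)⁻¹) * Var r₀ (condExp p r₀ f) ^ (m : ℝ)⁻¹ := by
  have hW := spectralWeight_nonneg (Set.Ioo_subset_Icc_self hp) f
  have hρ := (damping_pos hp hr).le
  have pow_le (S : Finset (Fin n)) : (damping p r ^ #S) ^ (m : ℝ) ≤ damping p r₀ ^ #S := by
    rw [Real.rpow_natCast, pow_right_comm]
    exact pow_le_pow_left₀ (pow_nonneg hρ m) hdamping #S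
  rw [Var_eq_sum_spectralWeight hp.1.ne' hp.2.ne,
    Var_condExp_eq_sum hp.1.ne' hp.2.ne hr₀.1.ne' hr₀.2.ne,
    Var_condExp_eq_sum hp.1.ne' hp.2.ne hr.1.ne' hr.2.ne]
  calc ∑ S ∈ univ.erase ∅, spectralWeight p f S * damping p r ^ #S
      ≤ (∑ S ∈ univ.erase ∅, spectralWeight p f S) ^ (1 - (m : ℝ)⁻¹) *
          (∑ S ∈ univ.erase ∅, spectralWeight p f S * (damping p r ^ #S) ^ (m : ℝ)) ^ (m : ℝ)⁻¹ :=
        Real.inner_le_weight_mul_Lp_of_nonneg _ (Nat.one_le_cast.2 (Nat.one_le_iff_ne_zero.2 hm))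
          _ _ hW fun S => pow_nonneg hρ _
    _ ≤ _ := by
        gcongr with S
        · exact Real.rpow_nonneg (sum_nonneg fun S _ => hW S) _
        · exact sum_nonneg fun S _ => mul_nonneg (hW S) (by positivity)
        · exact hW S
        · exact pow_le S

theorem clueless_for_some_iff_for_all_general {ι : Type*} {l : Filter ι} {n : ι → ℕ}
    (hp : p ∈ Set.Ioo (0 : ℝ) 1) (f : ∀ j, (Fin (n j) → Bool) → ℝ) {C : ℝ}
    (hf : ∀ j, Var p (f j) ≤ C) (hr₀ : r₀ ∈ Set.Ioo p 1)
    (h : Tendsto (fun j => Var r₀ (condExp p r₀ (f j))) l (nhds 0)) (hr : r ∈ Set.Ioo p 1) :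
    Tendsto (fun j => Var r (condExp p r (f j))) l (nhds 0) := by
  have hr₀' : r₀ ∈ Set.Ioo (0 : ℝ) 1 := Set.Ioo_subset_Ioo_left hp.1.le hr₀
  have hr' : r ∈ Set.Ioo (0 : ℝ) 1 := Set.Ioo_subset_Ioo_left hp.1.le hr
  have nonneg {q : ℝ} (hq : q ∈ Set.Ioo (0 : ℝ) 1) {k : ℕ} (g : (Fin k → Bool) → ℝ) :
      0 ≤ Var q g := Var_nonneg (Set.Ioo_subset_Icc_self hq) g
  obtain ⟨m, hm⟩ := exists_pow_lt_of_lt_one (damping_pos hp hr₀') (damping_lt_one hp hr.1)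
  have hm₀ : m ≠ 0 := by
    rintro rfl
    exact (damping_lt_one hp hr₀.1).not_gt (by simpa using hm)
  have exponent_nonneg : 0 ≤ 1 - (m : ℝ)⁻¹ := sub_nonneg.2 (Nat.cast_inv_le_one m)
  have bound_tendsto : Tendsto
      (fun j => C ^ (1 - (m : ℝ)⁻¹) * Var r₀ (condExp p r₀ (f j)) ^ (m : ℝ)⁻¹) l (nhds 0) := by
    have hm_inv : (0 : ℝ) < (m : ℝ)⁻¹ := by positivity
    simpa [Real.zero_rpow hm_inv.ne'] using
      (h.rpow_const (Or.inr hm_inv.le)).const_mul (C ^ (1 - (m : ℝ)⁻¹))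
  refine squeeze_zero (fun j => nonneg hr' _) (fun j => ?_) bound_tendsto
  refine (Var_condExp_le_rpow_mul_rpow hp hr₀' hr' hm₀ hm.le (f j)).trans ?_
  exact mul_le_mul_of_nonneg_right (Real.rpow_le_rpow (nonneg hp _) (hf j) exponent_nonneg)
    (Real.rpow_nonneg (nonneg hr₀' _) _)

end Comparison

/-- if the two-scale variance tends to `0` for some `r ∈ (p,1)`,
then it does for every `r ∈ (p,1)`. -/
theorem clueless_for_some_iff_for_all (p : ℝ) (hp : p ∈ Set.Ioo (0 : ℝ) 1)
    (f : ∀ n, (Fin n → Bool) → ℝ)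
    (hf : ∀ n ω, f n ω ∈ Set.Icc (0 : ℝ) 1)
    (h : ∃ r ∈ Set.Ioo p 1,
      Tendsto (fun n => Var r (condExp p r (f n))) atTop (nhds 0)) :
    ∀ r ∈ Set.Ioo p 1,
      Tendsto (fun n => Var r (condExp p r (f n))) atTop (nhds 0) := by
  obtain ⟨r₀, hr₀, hlim⟩ := h
  exact fun r hr => clueless_for_some_iff_for_all_general hp f
    (fun n => Var_le_sq_of_mem_Icc (Set.Ioo_subset_Icc_self hp) (hf n)) hr₀ hlim hr

end PartialObs
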